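/- Let a ∈ ℝ, let I_f be an interval with least element a, nonempty interior, and I_f ⊂ [a,∞), let m ∈ ℕ*, let α = (α₁,…,α_m) ∈ (0,1]^m, let q_a ∈ ℝ^m, and let f : ℝ^m × I_f → ℝ^m be a Carathéodory function such that f(0,·) is locally integrable on I_f and f is globally Lipschitz continuous in its first variable: for every compact subinterval [c,d] ⊂ I_f there exists L ≥ 0 with |f(x₂,t) − f(x₁,t)| ≤ L|x₂ − x₁| for all x₁, x₂ ∈ ℝ^m and almost every t ∈ [c,d]. Then the Riemann–Liouville Cauchy problem (D^{α_i}_{a+}[q_i] = f_i(q(·),·) a.e. on I_f, with I^{1−α_i}_{a+}[q_i](a) = (q_a)_i for each i) has a global solution on I_f, and any two global solutions are equal almost everywhere on I_f. -/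

import Mathlib

open MeasureTheory Set

/-- Left Riemann–Liouville fractional integral of order `α` with base point `a`
(for `α = 0` it is the identity). -/
noncomputable def rlInt (a α : ℝ) (q : ℝ → ℝ) (t : ℝ) : ℝ :=
  if α = 0 then q t else (1 / Real.Gamma α) * ∫ τ in a..t, (t - τ) ^ (α - 1) * q τ

/-- `q` is locally integrable on the interval `I` with least element `a`. -/
def LocIntegrableOn (a : ℝ) (I : Set ℝ) (q : ℝ → ℝ) : Prop :=
  ∀ b ∈ I, MeasureTheory.IntegrableOn q (Set.Icc a b)

/-- `q` is a global solution on `If` of the Riemann–Liouville Cauchy problem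
`D^{α_i}_{a+}[q_i] = F_i(q(·),·)` a.e. on `If`, `I^{1-α_i}_{a+}[q_i](a) = (qa)_i`. -/
def IsRLSolution (a : ℝ) (If : Set ℝ) {m : ℕ} (α : Fin m → ℝ)
    (qa : EuclideanSpace ℝ (Fin m))
    (F : EuclideanSpace ℝ (Fin m) → ℝ → EuclideanSpace ℝ (Fin m))
    (q : ℝ → EuclideanSpace ℝ (Fin m)) : Prop :=
  (∀ i, LocIntegrableOn a If fun t => q t i) ∧
  ∀ i, ∃ h : ℝ → ℝ, LocIntegrableOn a If h ∧
    (∀ᵐ t ∂(MeasureTheory.volume.restrict If),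
      rlInt a (1 - α i) (fun τ => q τ i) t = qa i + ∫ τ in a..t, h τ) ∧
    (∀ᵐ t ∂(MeasureTheory.volume.restrict If), h t = F (q t) t i)

/-!
By the semigroup law and the injectivity of the fractional integrals, the Cauchy problem on `[a, b]`
is equivalent to the Volterra equation
`q_i(t) = (q_a)_i (t - a) ^ (α_i - 1) / Γ(α_i) + I^{α_i}_{a+}[F_i(q(·), ·)](t)`.
Multiplication by `exp (-l t)` turns `I^α_{a+}` into the convolution with the integrable kernel
`exp (-l t) t ^ (α - 1) / Γ(α)`, whose mass is `l ^ (-α)`. The semigroup law thus becomes the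
associativity of the convolution, and injectivity follows from it because some integer-order
integral is injective by differentiation. By Young's inequality, the Volterra map contracts
`L¹([a, b], exp (-l t) dt)` as soon as `L ∑ i, l ^ (-α_i) < 1`. Uniqueness on each `[a, b]` lets
the local solutions be glued.
-/

open Filter Topology Convolution
open scoped NNReal

section Caratheodory

variable {Ω X Y : Type*} [MeasurableSpace Ω] {μ : Measure Ω}

theorem aestronglyMeasurable_comp_simpleFunc [TopologicalSpace Y]
    [TopologicalSpace.PseudoMetrizableSpace Y] {F : X → Ω → Y}
    (hF : ∀ x, AEStronglyMeasurable (F x) μ) (s : SimpleFunc Ω X) :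
    AEStronglyMeasurable (fun t => F (s t) t) μ := by
  have hcover : ⋃ x : s.range, s ⁻¹' {x.1} = univ :=
    eq_univ_of_forall fun t => mem_iUnion.2 ⟨⟨s t, s.mem_range_self t⟩, rfl⟩
  rw [← Measure.restrict_univ (μ := μ), ← hcover, aestronglyMeasurable_iUnion_iff]
  refine fun x => (hF x).restrict.congr ?_
  filter_upwards [ae_restrict_mem (s.measurableSet_fiber x.1)] with t ht
  rw [show s t = x from ht]

theorem aestronglyMeasurable_comp_of_continuous [TopologicalSpace X] [TopologicalSpace Y]
    [TopologicalSpace.PseudoMetrizableSpace Y] {F : X → Ω → Y}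
    (hF : ∀ x, AEStronglyMeasurable (F x) μ) (hcont : ∀ᵐ t ∂μ, Continuous fun x => F x t)
    {u : Ω → X} (hu : AEStronglyMeasurable u μ) :
    AEStronglyMeasurable (fun t => F (u t) t) μ := by
  obtain ⟨v, hv, huv⟩ := hu
  have hFv : AEStronglyMeasurable (fun t => F (v t) t) μ := by
    refine aestronglyMeasurable_of_tendsto_ae atTop
      (fun n => aestronglyMeasurable_comp_simpleFunc hF (hv.approx n)) ?_
    filter_upwards [hcont] with t ht
    exact (ht.tendsto _).comp (hv.tendsto_approx t)
  refine hFv.congr ?_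
  filter_upwards [huv] with t ht
  rw [ht]

theorem ae_lipschitzWith_of_forall_ae [PseudoMetricSpace X]
    [TopologicalSpace.SeparableSpace X] [PseudoMetricSpace Y] {F : X → Ω → Y} {L : ℝ≥0}
    (hcont : ∀ᵐ t ∂μ, Continuous fun x => F x t)
    (hF : ∀ x y, ∀ᵐ t ∂μ, dist (F x t) (F y t) ≤ L * dist x y) :
    ∀ᵐ t ∂μ, LipschitzWith L fun x => F x t := by
  obtain ⟨s, hs_countable, hs_dense⟩ := TopologicalSpace.exists_countable_dense X
  have hFs : ∀ᵐ t ∂μ, ∀ x ∈ s, ∀ y ∈ s, dist (F x t) (F y t) ≤ L * dist x y :=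
    (ae_ball_iff hs_countable).2 fun x _ => (ae_ball_iff hs_countable).2 fun y _ => hF x y
  filter_upwards [hcont, hFs] with t ht hts
  rw [← lipschitzOnWith_univ, ← hs_dense.closure_eq]
  exact (LipschitzOnWith.of_dist_le_mul hts).closure ht.continuousOn

/-- A Carathéodory map `F : X → Ω → Y` that is almost everywhere `L`-Lipschitz in its first
variable and integrable in the second one at `x = 0`; such a map acts on integrable functions
by `u ↦ F (u ·) ·`. -/
structure IsLipschitzCaratheodory [NormedAddCommGroup X] [NormedAddCommGroup Y]
    (μ : Measure Ω) (L : ℝ≥0) (F : X → Ω → Y) : Prop where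
  ae_lipschitzWith : ∀ᵐ t ∂μ, LipschitzWith L fun x => F x t
  aestronglyMeasurable : ∀ x, AEStronglyMeasurable (F x) μ
  integrable_zero : Integrable (F 0) μ

variable [NormedAddCommGroup X] [NormedAddCommGroup Y] {F : X → Ω → Y} {L : ℝ≥0} {u v : Ω → X}

theorem IsLipschitzCaratheodory.integrable_comp (hF : IsLipschitzCaratheodory μ L F)
    (hu : Integrable u μ) : Integrable (fun t => F (u t) t) μ := by
  refine (hF.integrable_zero.norm.add (hu.norm.const_mul L)).mono'
    (aestronglyMeasurable_comp_of_continuous hF.aestronglyMeasurable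
      (hF.ae_lipschitzWith.mono fun t ht => ht.continuous) hu.aestronglyMeasurable) ?_
  filter_upwards [hF.ae_lipschitzWith] with t ht
  calc ‖F (u t) t‖ ≤ ‖F 0 t‖ + ‖F (u t) t - F 0 t‖ := norm_le_norm_add_norm_sub' _ _
    _ ≤ ‖F 0 t‖ + L * ‖u t‖ := by
      gcongr
      simpa using ht.norm_sub_le (u t) 0

theorem integral_norm_comp_sub_le (hF : ∀ᵐ t ∂μ, LipschitzWith L fun x => F x t)
    (hu : Integrable u μ) (hv : Integrable v μ) :
    ∫ t, ‖F (u t) t - F (v t) t‖ ∂μ ≤ L * ∫ t, ‖u t - v t‖ ∂μ := by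
  rw [← integral_const_mul]
  refine integral_mono_of_nonneg (.of_forall fun t => norm_nonneg _)
    ((hu.sub hv).norm.const_mul _) ?_
  filter_upwards [hF] with t ht using ht.norm_sub_le _ _

end Caratheodory

section ContractionL1

variable {Ω E : Type*} [MeasurableSpace Ω] {μ : Measure Ω} [NormedAddCommGroup E]
  {Φ : (Ω → E) → Ω → E} {K : ℝ≥0} {u v : Ω → E}

theorem ae_eq_of_integral_norm_sub_eq_zero (hu : Integrable u μ) (hv : Integrable v μ)
    (h : ∫ t, ‖u t - v t‖ ∂μ = 0) : u =ᵐ[μ] v := by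
  have hzero := (integral_eq_zero_iff_of_nonneg (fun t => norm_nonneg _) (hu.sub hv).norm).1 h
  filter_upwards [hzero] with t ht
  exact sub_eq_zero.1 (norm_eq_zero.1 ht)

theorem exists_integrable_ae_fixedPoint [CompleteSpace E] (hK : K < 1)
    (hΦ_int : ∀ u, Integrable u μ → Integrable (Φ u) μ)
    (hΦ : ∀ u v, Integrable u μ → Integrable v μ →
      ∫ t, ‖Φ u t - Φ v t‖ ∂μ ≤ K * ∫ t, ‖u t - v t‖ ∂μ) :
    ∃ u, Integrable u μ ∧ Φ u =ᵐ[μ] u := by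
  let T : (Ω →₁[μ] E) → Ω →₁[μ] E := fun U => (hΦ_int U (L1.integrable_coeFn U)).toL1 _
  have hT : ∀ U, T U =ᵐ[μ] Φ U := fun U => Integrable.coeFn_toL1 _
  have hT_contracting : ContractingWith K T := by
    refine ⟨hK, LipschitzWith.of_dist_le_mul fun U V => ?_⟩
    rw [L1.dist_eq_integral_dist, L1.dist_eq_integral_dist]
    simp only [dist_eq_norm]
    calc ∫ t, ‖T U t - T V t‖ ∂μ = ∫ t, ‖Φ U t - Φ V t‖ ∂μ :=
          integral_congr_ae (((hT U).sub (hT V)).fun_comp _)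
      _ ≤ K * ∫ t, ‖U t - V t‖ ∂μ := hΦ _ _ (L1.integrable_coeFn U) (L1.integrable_coeFn V)
  refine ⟨hT_contracting.fixedPoint, L1.integrable_coeFn _, (hT _).symm.trans ?_⟩
  rw [hT_contracting.fixedPoint_isFixedPt.eq]

theorem ae_eq_of_ae_fixedPoints (hK : K < 1)
    (hΦ : ∀ u v, Integrable u μ → Integrable v μ →
      ∫ t, ‖Φ u t - Φ v t‖ ∂μ ≤ K * ∫ t, ‖u t - v t‖ ∂μ)
    (hu : Integrable u μ) (hv : Integrable v μ) (hΦu : Φ u =ᵐ[μ] u) (hΦv : Φ v =ᵐ[μ] v) :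
    u =ᵐ[μ] v := by
  have hle : ∫ t, ‖u t - v t‖ ∂μ ≤ K * ∫ t, ‖u t - v t‖ ∂μ :=
    (integral_congr_ae ((hΦu.sub hΦv).symm.fun_comp _)).trans_le (hΦ u v hu hv)
  have hnonneg : 0 ≤ ∫ t, ‖u t - v t‖ ∂μ := integral_nonneg fun t => norm_nonneg _
  exact ae_eq_of_integral_norm_sub_eq_zero hu hv (by nlinarith [NNReal.coe_lt_one.2 hK])

end ContractionL1

section Gluing

theorem exists_forall_ae_eq_restrict {Ω E : Type*} [MeasurableSpace Ω] {μ : Measure Ω}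
    {s : ℕ → Set Ω} (hs : ∀ n, MeasurableSet (s n)) {f : ℕ → Ω → E}
    (hf : ∀ m n, m ≤ n → f m =ᵐ[μ.restrict (s m)] f n) :
    ∃ g, ∀ n, g =ᵐ[μ.restrict (s n)] f n := by
  let first : Ω → ℕ := fun t => sInf {m | t ∈ s m}
  refine ⟨fun t => f (first t) t, fun n => ?_⟩
  have hagree : ∀ᵐ t ∂μ, ∀ m, m ≤ n → t ∈ s m → f m t = f n t := by
    refine ae_all_iff.2 fun m => ?_
    by_cases hmn : m ≤ n
    · simpa only [hmn, true_imp_iff] using (ae_restrict_iff' (hs m)).1 (hf m n hmn)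
    · simp only [hmn, false_imp_iff, eventually_true]
  filter_upwards [ae_restrict_of_ae hagree, ae_restrict_mem (hs n)] with t ht htn
  exact ht (first t) (Nat.sInf_le htn) (Nat.sInf_mem (s := {m | t ∈ s m}) ⟨n, htn⟩)

variable {a : ℝ} {I : Set ℝ}

theorem exists_seq_monotone_cofinal (hI : I.OrdConnected) (hne : I.Nonempty) :
    ∃ b : ℕ → ℝ, Monotone b ∧ (∀ n, b n ∈ I) ∧ ∀ t ∈ I, ∃ n, t ≤ b n := by
  have := hne.to_subtype
  obtain ⟨b, hb_mono, hb_tendsto⟩ := exists_seq_monotone_tendsto_atTop_atTop I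
  refine ⟨fun n => b n, hb_mono, fun n => (b n).2, fun t ht => ?_⟩
  exact (hb_tendsto.eventually_ge_atTop ⟨t, ht⟩).exists

theorem ae_restrict_of_forall_ae_restrict_Icc (hI : I.OrdConnected) (haI : a ∈ I)
    (hIa : I ⊆ Ici a) {p : ℝ → Prop} (hp : ∀ b ∈ I, ∀ᵐ t ∂volume.restrict (Icc a b), p t) :
    ∀ᵐ t ∂volume.restrict I, p t := by
  obtain ⟨b, -, hbI, hb⟩ := exists_seq_monotone_cofinal hI ⟨a, haI⟩
  have hcover : I ⊆ ⋃ n, Icc a (b n) := fun t ht =>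
    mem_iUnion.2 ((hb t ht).imp fun n hn => ⟨hIa ht, hn⟩)
  exact ae_restrict_of_ae_restrict_of_subset hcover
    ((ae_restrict_iUnion_iff _ _).2 fun n => hp (b n) (hbI n))

theorem exists_forall_ae_eq_Icc {E : Type*} (hI : I.OrdConnected) (hne : I.Nonempty)
    {f : ℝ → ℝ → E}
    (hf : ∀ b ∈ I, ∀ c ∈ I, b ≤ c → f b =ᵐ[volume.restrict (Icc a b)] f c) :
    ∃ g : ℝ → E, ∀ b ∈ I, g =ᵐ[volume.restrict (Icc a b)] f b := by
  obtain ⟨b, hb_mono, hbI, hb⟩ := exists_seq_monotone_cofinal hI hne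
  obtain ⟨g, hg⟩ := exists_forall_ae_eq_restrict (fun n => measurableSet_Icc)
    fun m n hmn => hf (b m) (hbI m) (b n) (hbI n) (hb_mono hmn)
  refine ⟨g, fun c hc => ?_⟩
  obtain ⟨n, hn⟩ := hb c hc
  have hgc : g =ᵐ[volume.restrict (Icc a c)] f (b n) :=
    ae_restrict_of_ae_restrict_of_subset (Icc_subset_Icc_right hn) (hg n)
  exact hgc.trans (hf c hc (b n) (hbI n) hn).symm

end Gluing

section Convolution

theorem integral_norm_convolution_le {𝕜 G E E' F : Type*} [NontriviallyNormedField 𝕜]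
    [NormedAddCommGroup E] [NormedSpace 𝕜 E] [NormedAddCommGroup E'] [NormedSpace 𝕜 E']
    [NormedAddCommGroup F] [NormedSpace 𝕜 F] [NormedSpace ℝ F] [AddGroup G] [MeasurableSpace G]
    [MeasurableAdd₂ G] [MeasurableNeg G] {μ : Measure G} [SFinite μ] [μ.IsAddRightInvariant]
    (L : E →L[𝕜] E' →L[𝕜] F) {f : G → E} {g : G → E'} (hf : Integrable f μ)
    (hg : Integrable g μ) :
    ∫ x, ‖(f ⋆[L, μ] g) x‖ ∂μ ≤ ‖L‖ * ((∫ x, ‖f x‖ ∂μ) * ∫ x, ‖g x‖ ∂μ) := by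
  let M := ContinuousLinearMap.mul ℝ ℝ
  have hfg : Integrable ((fun x => ‖f x‖) ⋆[M, μ] fun x => ‖g x‖) μ :=
    hf.norm.integrable_convolution M hg.norm
  have hpointwise : ∀ᵐ x ∂μ,
      ‖(f ⋆[L, μ] g) x‖ ≤ ‖L‖ * ((fun x => ‖f x‖) ⋆[M, μ] fun x => ‖g x‖) x := by
    filter_upwards [hf.norm.ae_convolution_exists M hg.norm] with x hx
    rw [convolution_mul, ← integral_const_mul]
    refine norm_integral_le_of_norm_le (hx.integrable.const_mul _) (.of_forall fun t => ?_)
    simpa only [mul_assoc] using L.le_opNorm₂ (f t) (g (x - t))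
  calc ∫ x, ‖(f ⋆[L, μ] g) x‖ ∂μ
      ≤ ∫ x, ‖L‖ * ((fun x => ‖f x‖) ⋆[M, μ] fun x => ‖g x‖) x ∂μ :=
        integral_mono_of_nonneg (.of_forall fun x => norm_nonneg _) (hfg.const_mul _) hpointwise
    _ = ‖L‖ * ((∫ x, ‖f x‖ ∂μ) * ∫ x, ‖g x‖ ∂μ) := by
        rw [integral_const_mul, integral_convolution M hf.norm hg.norm,
          ContinuousLinearMap.mul_apply']

end Convolution

section Kernel

/-- The function `(t - a) ^ (α - 1) / Γ(α)`: the convolution kernel of the Riemann–Liouville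
integral when `a = 0`, and the solution of `I^{1-α}_{a+}[q] = 1` in general. -/
noncomputable def rlPower (a α t : ℝ) : ℝ := (t - a) ^ (α - 1) / Real.Gamma α

/-- The function `u` multiplied by `exp (-l t)` and set to zero outside `s`. -/
noncomputable def expTilt (l : ℝ) (s : Set ℝ) (u : ℝ → ℝ) : ℝ → ℝ :=
  s.indicator fun t => Real.exp (-(l * t)) * u t

/-- The exponentially tilted Riemann–Liouville kernel
`exp (-l t) t ^ (α - 1) / Γ(α)` on `t > 0`, which is integrable on the whole line. -/
noncomputable def rlKernel (l α : ℝ) : ℝ → ℝ := expTilt l (Ioi 0) (rlPower 0 α)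

variable {a b l α β t : ℝ} {u v : ℝ → ℝ}

theorem expTilt_of_mem {s : Set ℝ} (ht : t ∈ s) :
    expTilt l s u t = Real.exp (-(l * t)) * u t :=
  indicator_of_mem ht _

theorem expTilt_of_notMem {s : Set ℝ} (ht : t ∉ s) : expTilt l s u t = 0 :=
  indicator_of_notMem ht _

theorem expTilt_congr {s : Set ℝ} (h : EqOn u v s) : expTilt l s u = expTilt l s v :=
  indicator_congr fun t ht => by rw [h ht]

theorem rlKernel_nonneg (hα : 0 < α) (t : ℝ) : 0 ≤ rlKernel l α t := by
  unfold rlKernel expTilt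
  refine indicator_nonneg (fun t (ht : 0 < t) => mul_nonneg (Real.exp_pos _).le ?_) t
  exact div_nonneg (Real.rpow_nonneg (sub_nonneg.2 ht.le) _) (Real.Gamma_pos_of_pos hα).le

theorem rlKernel_eq_indicator : rlKernel l α =
    (Ioi 0).indicator fun t => t ^ (α - 1) * Real.exp (-(l * t)) / Real.Gamma α := by
  unfold rlKernel expTilt rlPower
  congr 1 with t
  rw [sub_zero]
  ring

theorem integrable_rlKernel (hl : 0 < l) (hα : 0 < α) : Integrable (rlKernel l α) := by
  rw [rlKernel_eq_indicator, integrable_indicator_iff measurableSet_Ioi]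
  have h := integrableOn_rpow_mul_exp_neg_mul_rpow (s := α - 1) (by linarith) one_pos hl
  simp only [Real.rpow_one, neg_mul] at h
  exact h.div_const _

theorem integral_rlKernel (hl : 0 < l) (hα : 0 < α) : ∫ t, rlKernel l α t = (1 / l) ^ α := by
  rw [rlKernel_eq_indicator, integral_indicator measurableSet_Ioi, integral_div,
    Real.integral_rpow_mul_exp_neg_mul_Ioi hα hl,
    mul_div_cancel_right₀ _ (Real.Gamma_pos_of_pos hα).ne']

theorem integrableOn_rlPower (hα : 0 < α) (a b : ℝ) : IntegrableOn (rlPower a α) (Icc a b) := by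
  rcases le_or_gt a b with hab | hba
  · rw [← intervalIntegrable_iff_integrableOn_Icc_of_le hab]
    have h : IntervalIntegrable (fun s : ℝ => s ^ (α - 1)) volume 0 (b - a) :=
      intervalIntegral.intervalIntegrable_rpow' (by linarith)
    have h' := (h.comp_sub_right a).div_const (Real.Gamma α)
    rwa [zero_add, sub_add_cancel] at h'
  · simp only [Icc_eq_empty hba.not_ge, integrableOn_empty]

theorem integral_rpow_mul_sub_rpow (hα : 0 < α) (hβ : 0 < β) (ht : 0 < t) :
    ∫ s in (0 : ℝ)..t, s ^ (α - 1) * (t - s) ^ (β - 1) =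
      t ^ (α + β - 1) * (Real.Gamma α * Real.Gamma β / Real.Gamma (α + β)) := by
  have hbeta := Complex.betaIntegral_scaled α β ht
  rw [Complex.betaIntegral_eq_Gamma_mul_div (α : ℂ) β (by simpa) (by simpa)] at hbeta
  apply Complex.ofReal_injective
  rw [← intervalIntegral.integral_ofReal]
  push_cast [Complex.ofReal_cpow ht.le, ← Complex.Gamma_ofReal] at hbeta ⊢
  rw [← hbeta]
  refine intervalIntegral.integral_congr fun s hs => ?_
  rw [uIcc_of_le ht.le] at hs
  simp only [Complex.ofReal_cpow hs.1, Complex.ofReal_cpow (sub_nonneg.2 hs.2),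
    Complex.ofReal_sub, Complex.ofReal_one]

theorem integral_sub_rpow_mul_sub_rpow (hα : 0 < α) (hβ : 0 < β) (hab : a < b) :
    ∫ t in a..b, (b - t) ^ (β - 1) * (t - a) ^ (α - 1) =
      (b - a) ^ (α + β - 1) * (Real.Gamma α * Real.Gamma β / Real.Gamma (α + β)) := by
  rw [← integral_rpow_mul_sub_rpow hα hβ (sub_pos.2 hab), ← sub_self a,
    ← intervalIntegral.integral_comp_sub_right]
  refine intervalIntegral.integral_congr fun t _ => ?_
  simp only [sub_sub_sub_cancel_right, mul_comm]

theorem rlInt_zero (a : ℝ) (u : ℝ → ℝ) : rlInt a 0 u = u :=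
  funext fun _ => if_pos rfl

theorem rlInt_one (a : ℝ) (u : ℝ → ℝ) : rlInt a 1 u = fun t => ∫ τ in a..t, u τ := by
  ext t
  simp [rlInt]

theorem rlInt_rlPower (hα : 0 < α) (hβ : 0 ≤ β) (hat : a < t) :
    rlInt a β (rlPower a α) t = rlPower a (α + β) t := by
  rcases hβ.eq_or_lt with rfl | hβ
  · rw [rlInt_zero, add_zero]
  have hΓα := (Real.Gamma_pos_of_pos hα).ne'
  have hΓβ := (Real.Gamma_pos_of_pos hβ).ne'
  simp only [rlInt, if_neg hβ.ne', rlPower, ← mul_div_assoc]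
  rw [intervalIntegral.integral_div, integral_sub_rpow_mul_sub_rpow hα hβ hat]
  field_simp

/-- Splitting `exp (-l t) = exp (-l τ) * exp (-l (t - τ))`. -/
theorem mul_rlKernel_sub {f : ℝ → ℝ} (hf : EqOn f (expTilt l (Ioi a) u) (Iio t)) :
    (fun τ => f τ * rlKernel l α (t - τ)) = (Ioo a t).indicator fun τ =>
      Real.exp (-(l * t)) * (1 / Real.Gamma α) * ((t - τ) ^ (α - 1) * u τ) := by
  ext τ
  rcases le_or_gt t τ with hτt | hτt
  · rw [indicator_of_notMem (notMem_Ioo_of_ge hτt), rlKernel,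
      expTilt_of_notMem (notMem_Ioi.2 (sub_nonpos.2 hτt)), mul_zero]
  rw [hf hτt]
  rcases le_or_gt τ a with hτa | haτ
  · rw [indicator_of_notMem (notMem_Ioo_of_le hτa), expTilt_of_notMem (notMem_Ioi.2 hτa),
      zero_mul]
  rw [indicator_of_mem (mem_Ioo.2 ⟨haτ, hτt⟩), expTilt_of_mem (mem_Ioi.2 haτ), rlKernel,
    expTilt_of_mem (mem_Ioi.2 (sub_pos.2 hτt)), rlPower, sub_zero,
    show -(l * t) = -(l * τ) + -(l * (t - τ)) by ring, Real.exp_add]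
  ring

theorem convolution_rlKernel (hα : 0 < α) {f : ℝ → ℝ}
    (hf : EqOn f (expTilt l (Ioi a) u) (Iio t)) :
    (f ⋆ rlKernel l α) t = expTilt l (Ioi a) (rlInt a α u) t := by
  rw [convolution_lsmul]
  simp only [smul_eq_mul]
  rw [mul_rlKernel_sub hf, integral_indicator measurableSet_Ioo]
  rcases le_or_gt t a with hta | hat
  · rw [Ioo_eq_empty hta.not_gt, setIntegral_empty, expTilt_of_notMem (notMem_Ioi.2 hta)]
  · rw [expTilt_of_mem (mem_Ioi.2 hat), rlInt, if_neg hα.ne', integral_const_mul, mul_assoc,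
      ← integral_Ioc_eq_integral_Ioo, ← intervalIntegral.integral_of_le hat.le]

theorem rlKernel_convolution_rlKernel (hα : 0 < α) (hβ : 0 < β) :
    (rlKernel l α ⋆ rlKernel l β) = rlKernel l (α + β) := by
  ext t
  calc (rlKernel l α ⋆ rlKernel l β) t = expTilt l (Ioi 0) (rlInt 0 β (rlPower 0 α)) t :=
        convolution_rlKernel hβ fun _ _ => rfl
    _ = rlKernel l (α + β) t :=
        congrFun (expTilt_congr fun s hs => rlInt_rlPower hα hβ.le hs) t

end Kernel

section FractionalIntegral

variable {a b l α β c t : ℝ} {u v k : ℝ → ℝ}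

theorem ae_restrict_Icc_mem_Ioc (a b : ℝ) : ∀ᵐ t ∂volume.restrict (Icc a b), t ∈ Ioc a b := by
  rw [← restrict_Ioc_eq_restrict_Icc]
  exact ae_restrict_mem measurableSet_Ioc

theorem expTilt_Ioc_eqOn (htb : t ≤ b) :
    EqOn (expTilt l (Ioc a b) u) (expTilt l (Ioi a) u) (Iio t) := fun τ hτ => by
  rcases le_or_gt τ a with hτa | haτ
  · rw [expTilt_of_notMem (notMem_Ioc_of_le hτa), expTilt_of_notMem (notMem_Ioi.2 hτa)]
  · rw [expTilt_of_mem (mem_Ioc.2 ⟨haτ, (mem_Iio.1 hτ).le.trans htb⟩),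
      expTilt_of_mem (mem_Ioi.2 haτ)]

theorem integrable_expTilt (hu : IntegrableOn u (Icc a b)) :
    Integrable (expTilt l (Ioc a b) u) := by
  rw [expTilt, integrable_indicator_iff measurableSet_Ioc]
  exact (hu.continuousOn_mul (by fun_prop) isCompact_Icc).mono_set Ioc_subset_Icc_self

theorem convolution_expTilt_Ioc (hα : 0 < α) (ht : t ∈ Ioc a b) :
    (expTilt l (Ioc a b) u ⋆ rlKernel l α) t = Real.exp (-(l * t)) * rlInt a α u t := by
  rw [convolution_rlKernel hα (expTilt_Ioc_eqOn ht.2), expTilt_of_mem (mem_Ioi.2 ht.1)]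

theorem integrableOn_rlInt (hα : 0 < α) (hu : IntegrableOn u (Icc a b)) :
    IntegrableOn (rlInt a α u) (Icc a b) := by
  have htilt : IntegrableOn (fun t => Real.exp (-(1 * t)) * rlInt a α u t) (Ioc a b) :=
    ((integrable_expTilt hu).integrable_convolution _
      (integrable_rlKernel one_pos hα)).integrableOn.congr_fun
        (fun t ht => convolution_expTilt_Ioc hα ht) measurableSet_Ioc
  rw [← integrableOn_Icc_iff_integrableOn_Ioc] at htilt
  refine (htilt.continuousOn_mul (g := fun t => Real.exp (1 * t)) (by fun_prop)
    isCompact_Icc).congr_fun (fun t _ => ?_) measurableSet_Icc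
  simp only [← mul_assoc, ← Real.exp_add, add_neg_cancel, Real.exp_zero, one_mul]

theorem ae_intervalIntegrable_rpow_mul (hα : 0 < α) (hu : IntegrableOn u (Icc a b)) :
    ∀ᵐ t ∂volume.restrict (Icc a b),
      IntervalIntegrable (fun τ => (t - τ) ^ (α - 1) * u τ) volume a t := by
  filter_upwards [ae_restrict_of_ae ((integrable_expTilt (l := 1) hu).ae_convolution_exists
    (ContinuousLinearMap.lsmul ℝ ℝ) (integrable_rlKernel one_pos hα)),
    ae_restrict_Icc_mem_Ioc a b] with t hconv ht
  have hconv : Integrable fun τ => expTilt 1 (Ioc a b) u τ * rlKernel 1 α (t - τ) := hconv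
  rw [mul_rlKernel_sub (expTilt_Ioc_eqOn ht.2), integrable_indicator_iff measurableSet_Ioo] at hconv
  rw [intervalIntegrable_iff_integrableOn_Ioo_of_le ht.1.le]
  have hΓ := (Real.Gamma_pos_of_pos hα).ne'
  exact (integrable_const_mul_iff (by simpa using hΓ) _).1 hconv

theorem rlInt_add (hα : 0 ≤ α) (hu : IntegrableOn u (Icc a b)) (hv : IntegrableOn v (Icc a b)) :
    rlInt a α (u + v) =ᵐ[volume.restrict (Icc a b)] rlInt a α u + rlInt a α v := by
  rcases hα.eq_or_lt with rfl | hα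
  · simp only [rlInt_zero, EventuallyEq.rfl]
  filter_upwards [ae_intervalIntegrable_rpow_mul hα hu, ae_intervalIntegrable_rpow_mul hα hv]
    with t hut hvt
  simp only [rlInt, if_neg hα.ne', Pi.add_apply, mul_add, intervalIntegral.integral_add hut hvt]

theorem rlInt_sub (hα : 0 ≤ α) (hu : IntegrableOn u (Icc a b)) (hv : IntegrableOn v (Icc a b)) :
    rlInt a α (u - v) =ᵐ[volume.restrict (Icc a b)] rlInt a α u - rlInt a α v := by
  filter_upwards [rlInt_add hα (hu.sub hv) hv] with t ht
  rw [sub_add_cancel] at ht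
  rw [Pi.sub_apply, ht, Pi.add_apply, add_sub_cancel_right]

theorem rlInt_const_mul (a α c : ℝ) (u : ℝ → ℝ) :
    (rlInt a α fun τ => c * u τ) = fun t => c * rlInt a α u t := by
  ext t
  by_cases hα : α = 0
  · simp only [rlInt, if_pos hα]
  · simp only [rlInt, if_neg hα, mul_left_comm _ c, intervalIntegral.integral_const_mul]

theorem rlInt_congr_ae (hα : 0 ≤ α) (huv : u =ᵐ[volume.restrict (Icc a b)] v) :
    rlInt a α u =ᵐ[volume.restrict (Icc a b)] rlInt a α v := by
  rcases hα.eq_or_lt with rfl | hα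
  · simpa only [rlInt_zero] using huv
  filter_upwards [ae_restrict_mem measurableSet_Icc] with t ht
  simp only [rlInt, if_neg hα.ne', intervalIntegral.integral_of_le ht.1]
  congr 1
  refine integral_congr_ae ?_
  filter_upwards [ae_restrict_of_ae_restrict_of_subset
    (Ioc_subset_Icc_self.trans (Icc_subset_Icc_right ht.2)) huv] with τ hτ
  rw [hτ]

theorem rlInt_rlInt_of_pos (hα : 0 < α) (hβ : 0 < β) (hu : IntegrableOn u (Icc a b)) :
    rlInt a β (rlInt a α u) =ᵐ[volume.restrict (Icc a b)] rlInt a (α + β) u := by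
  let U := expTilt 1 (Ioc a b) u
  have hU : Integrable U := integrable_expTilt hu
  have hkα := integrable_rlKernel one_pos hα
  have hkβ := integrable_rlKernel one_pos hβ
  have hassoc : ∀ᵐ t, ((U ⋆ rlKernel 1 α) ⋆ rlKernel 1 β) t = (U ⋆ rlKernel 1 (α + β)) t := by
    filter_upwards [hU.norm.ae_convolution_exists (ContinuousLinearMap.mul ℝ ℝ)
      (hkα.norm.integrable_convolution (ContinuousLinearMap.mul ℝ ℝ) hkβ.norm)] with t ht
    rw [← rlKernel_convolution_rlKernel hα hβ]
    exact convolution_assoc _ _ _ _ (fun x y z => mul_assoc x y z) hU.aestronglyMeasurable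
      hkα.aestronglyMeasurable hkβ.aestronglyMeasurable (hU.ae_convolution_exists _ hkα)
      (hkα.norm.ae_convolution_exists _ hkβ.norm) ht
  filter_upwards [ae_restrict_of_ae hassoc, ae_restrict_Icc_mem_Ioc a b] with t hassoc ht
  have hUα : EqOn (U ⋆ rlKernel 1 α) (expTilt 1 (Ioi a) (rlInt a α u)) (Iio t) := fun τ hτ =>
    convolution_rlKernel hα (expTilt_Ioc_eqOn ((mem_Iio.1 hτ).le.trans ht.2))
  rw [convolution_rlKernel hβ hUα, convolution_expTilt_Ioc (add_pos hα hβ) ht,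
    expTilt_of_mem (mem_Ioi.2 ht.1)] at hassoc
  exact mul_left_cancel₀ (Real.exp_pos _).ne' hassoc

theorem rlInt_rlInt (hα : 0 ≤ α) (hβ : 0 ≤ β) (hu : IntegrableOn u (Icc a b)) :
    rlInt a β (rlInt a α u) =ᵐ[volume.restrict (Icc a b)] rlInt a (α + β) u := by
  rcases hα.eq_or_lt with rfl | hα
  · rw [rlInt_zero, zero_add]
  rcases hβ.eq_or_lt with rfl | hβ
  · rw [rlInt_zero, add_zero]
  exact rlInt_rlInt_of_pos hα hβ hu

theorem ae_eq_of_rlInt_one_ae_eq (hu : IntegrableOn u (Icc a b)) (hv : IntegrableOn v (Icc a b))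
    (h : rlInt a 1 u =ᵐ[volume.restrict (Icc a b)] rlInt a 1 v) :
    u =ᵐ[volume.restrict (Icc a b)] v := by
  rcases le_or_gt b a with hba | hab
  · rw [EventuallyEq, ← restrict_Ioo_eq_restrict_Icc, Ioo_eq_empty hba.not_gt,
      Measure.restrict_empty]
    exact ae_zero.symm ▸ eventually_bot
  simp only [rlInt_one] at h
  rw [← uIcc_of_le hab.le] at hu hv
  have hprimitive : EqOn (fun t => ∫ τ in a..t, u τ) (fun t => ∫ τ in a..t, v τ) (Icc a b) := by
    refine Measure.eqOn_Icc_of_ae_eq volume hab.ne h ?_ ?_ <;> rw [← uIcc_of_le hab.le]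
    · exact intervalIntegral.continuousOn_primitive_interval hu
    · exact intervalIntegral.continuousOn_primitive_interval hv
  rw [EventuallyEq, ← restrict_Ioo_eq_restrict_Icc, ae_restrict_iff' measurableSet_Ioo]
  filter_upwards [((intervalIntegrable_iff' (f := u)).2 hu).ae_hasDerivAt_integral,
    ((intervalIntegrable_iff' (f := v)).2 hv).ae_hasDerivAt_integral] with t hut hvt ht
  have htab : t ∈ uIcc a b := Ioo_subset_Icc_self.trans Icc_subset_uIcc ht
  refine (hut htab a left_mem_uIcc).unique ((hvt htab a left_mem_uIcc).congr_of_eventuallyEq ?_)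
  exact hprimitive.eventuallyEq_of_mem (Icc_mem_nhds ht.1 ht.2)

theorem ae_eq_of_rlInt_natCast_ae_eq (n : ℕ) (hu : IntegrableOn u (Icc a b))
    (hv : IntegrableOn v (Icc a b))
    (h : rlInt a n u =ᵐ[volume.restrict (Icc a b)] rlInt a n v) :
    u =ᵐ[volume.restrict (Icc a b)] v := by
  induction n generalizing u v with
  | zero => simpa only [Nat.cast_zero, rlInt_zero] using h
  | succ n ih =>
    rw [Nat.cast_succ, add_comm] at h
    have h1 : rlInt a n (rlInt a 1 u) =ᵐ[volume.restrict (Icc a b)] rlInt a n (rlInt a 1 v) :=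
      (rlInt_rlInt zero_le_one n.cast_nonneg hu).trans
        (h.trans (rlInt_rlInt zero_le_one n.cast_nonneg hv).symm)
    exact ae_eq_of_rlInt_one_ae_eq hu hv
      (ih (integrableOn_rlInt one_pos hu) (integrableOn_rlInt one_pos hv) h1)

theorem rlInt_ae_eq_iff (hα : 0 ≤ α) (hu : IntegrableOn u (Icc a b))
    (hv : IntegrableOn v (Icc a b)) :
    rlInt a α u =ᵐ[volume.restrict (Icc a b)] rlInt a α v ↔
      u =ᵐ[volume.restrict (Icc a b)] v := by
  refine ⟨fun h => ?_, rlInt_congr_ae hα⟩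
  have hceil : 0 ≤ ⌈α⌉₊ - α := sub_nonneg.2 (Nat.le_ceil α)
  refine ae_eq_of_rlInt_natCast_ae_eq ⌈α⌉₊ hu hv ?_
  have hu' := rlInt_rlInt hα hceil hu
  have hv' := rlInt_rlInt hα hceil hv
  rw [add_sub_cancel] at hu' hv'
  exact hu'.symm.trans ((rlInt_congr_ae hceil h).trans hv')

theorem integrableOn_rlPower_add_rlInt (hα : 0 < α) (c : ℝ) (hk : IntegrableOn k (Icc a b)) :
    IntegrableOn (fun t => c * rlPower a α t + rlInt a α k t) (Icc a b) :=
  ((integrableOn_rlPower hα a b).const_mul c).add (integrableOn_rlInt hα hk)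

theorem rlInt_rlPower_add_rlInt (hα : 0 < α) (hα1 : α ≤ 1) (c : ℝ) (hk : IntegrableOn k (Icc a b)) :
    rlInt a (1 - α) (fun t => c * rlPower a α t + rlInt a α k t)
      =ᵐ[volume.restrict (Icc a b)] fun t => c + ∫ τ in a..t, k τ := by
  have hα1 : 0 ≤ 1 - α := sub_nonneg.2 hα1
  filter_upwards [rlInt_add hα1 ((integrableOn_rlPower hα a b).const_mul c)
    (integrableOn_rlInt hα hk), rlInt_rlInt hα.le hα1 hk, ae_restrict_Icc_mem_Ioc a b]
    with t hadd hsemigroup ht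
  refine hadd.trans ?_
  simp only [Pi.add_apply, rlInt_const_mul]
  rw [hsemigroup, rlInt_rlPower hα hα1 ht.1, add_sub_cancel,
    rlInt_one, rlPower, sub_self, Real.rpow_zero, Real.Gamma_one, div_one, mul_one]

theorem rlInt_ae_eq_add_integral_iff (hα : 0 < α) (hα1 : α ≤ 1) (hu : IntegrableOn u (Icc a b))
    (hk : IntegrableOn k (Icc a b)) :
    (rlInt a (1 - α) u =ᵐ[volume.restrict (Icc a b)] fun t => c + ∫ τ in a..t, k τ) ↔
      u =ᵐ[volume.restrict (Icc a b)] fun t => c * rlPower a α t + rlInt a α k t := by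
  have hvolterra := rlInt_rlPower_add_rlInt hα hα1 c hk
  rw [← rlInt_ae_eq_iff (sub_nonneg.2 hα1) hu
    (integrableOn_rlPower_add_rlInt hα c hk)]
  exact ⟨fun h => h.trans hvolterra.symm, fun h => h.trans hvolterra⟩

end FractionalIntegral

section ExpMeasure

/-- The Bielecki-weighted Lebesgue measure `exp (-l t) dt` on `[a, b]`. -/
noncomputable def expMeasure (l a b : ℝ) : Measure ℝ :=
  (volume.restrict (Icc a b)).withDensity fun t => ENNReal.ofReal (Real.exp (-(l * t)))

variable {a b l α : ℝ} {u : ℝ → ℝ}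

theorem measurable_ofReal_exp_neg_mul (l : ℝ) :
    Measurable fun t : ℝ => ENNReal.ofReal (Real.exp (-(l * t))) := by
  fun_prop

theorem ae_expMeasure (l a b : ℝ) : ae (expMeasure l a b) = ae (volume.restrict (Icc a b)) := by
  refine le_antisymm (withDensity_absolutelyContinuous _ _).ae_le
    (withDensity_absolutelyContinuous' (measurable_ofReal_exp_neg_mul l).aemeasurable ?_).ae_le
  exact .of_forall fun t => (ENNReal.ofReal_pos.2 (Real.exp_pos _)).ne'

theorem integrable_expMeasure_iff {E : Type*} [NormedAddCommGroup E] [NormedSpace ℝ E]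
    {f : ℝ → E} : Integrable f (expMeasure l a b) ↔ IntegrableOn f (Icc a b) := by
  rw [expMeasure, integrable_withDensity_iff_integrable_smul' (measurable_ofReal_exp_neg_mul l)
    (.of_forall fun t => ENNReal.ofReal_lt_top)]
  simp only [ENNReal.toReal_ofReal (Real.exp_pos _).le]
  refine ⟨fun h => ?_, fun h => IntegrableOn.continuousOn_smul h (by fun_prop) isCompact_Icc⟩
  refine (IntegrableOn.continuousOn_smul (f := fun t => Real.exp (l * t))
    (g := fun t => Real.exp (-(l * t)) • f t) h (by fun_prop) isCompact_Icc).congr_fun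
    (fun t _ => ?_) measurableSet_Icc
  simp only [smul_smul, ← Real.exp_add, add_neg_cancel, Real.exp_zero, one_smul]

theorem integral_norm_expMeasure (l a b : ℝ) (u : ℝ → ℝ) :
    ∫ t, ‖u t‖ ∂expMeasure l a b = ∫ t in Ioc a b, ‖Real.exp (-(l * t)) * u t‖ := by
  rw [expMeasure, integral_withDensity_eq_integral_toReal_smul (measurable_ofReal_exp_neg_mul l)
    (.of_forall fun t => ENNReal.ofReal_lt_top), restrict_Ioc_eq_restrict_Icc]
  simp only [ENNReal.toReal_ofReal (Real.exp_pos _).le, smul_eq_mul, norm_mul, Real.norm_eq_abs,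
    Real.abs_exp]

theorem integral_norm_expTilt (l a b : ℝ) (u : ℝ → ℝ) :
    ∫ t, ‖expTilt l (Ioc a b) u t‖ = ∫ t, ‖u t‖ ∂expMeasure l a b := by
  simp only [integral_norm_expMeasure, expTilt, norm_indicator_eq_indicator_norm,
    integral_indicator measurableSet_Ioc]

theorem integral_norm_rlInt_le (hl : 0 < l) (hα : 0 < α) (hu : IntegrableOn u (Icc a b)) :
    ∫ t, ‖rlInt a α u t‖ ∂expMeasure l a b ≤ (1 / l) ^ α * ∫ t, ‖u t‖ ∂expMeasure l a b := by
  have hU : Integrable (expTilt l (Ioc a b) u) := integrable_expTilt hu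
  have hk := integrable_rlKernel hl hα
  have hk_mass : ∫ t, ‖rlKernel l α t‖ = (1 / l) ^ α := by
    simp only [Real.norm_of_nonneg (rlKernel_nonneg hα _), integral_rlKernel hl hα]
  calc ∫ t, ‖rlInt a α u t‖ ∂expMeasure l a b
      = ∫ t in Ioc a b, ‖(expTilt l (Ioc a b) u ⋆ rlKernel l α) t‖ := by
        rw [integral_norm_expMeasure]
        exact setIntegral_congr_fun measurableSet_Ioc fun t ht => by
          simp only [convolution_expTilt_Ioc hα ht]
    _ ≤ ∫ t, ‖(expTilt l (Ioc a b) u ⋆ rlKernel l α) t‖ :=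
        setIntegral_le_integral (hU.integrable_convolution _ hk).norm
          (.of_forall fun t => norm_nonneg _)
    _ ≤ 1 * ((∫ t, ‖expTilt l (Ioc a b) u t‖) * ∫ t, ‖rlKernel l α t‖) :=
        (integral_norm_convolution_le _ hU hk).trans <| by
          gcongr
          exact ContinuousLinearMap.opNorm_lsmul_le
    _ = (1 / l) ^ α * ∫ t, ‖u t‖ ∂expMeasure l a b := by
        rw [one_mul, integral_norm_expTilt, hk_mass, mul_comm]

end ExpMeasure

section Volterra

variable {ι : Type*} [Fintype ι]

theorem norm_le_sum_norm_apply (x : EuclideanSpace ℝ ι) : ‖x‖ ≤ ∑ i, ‖x i‖ := by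
  rw [EuclideanSpace.norm_eq, Real.sqrt_le_iff]
  exact ⟨Finset.sum_nonneg fun i _ => norm_nonneg _,
    Finset.sum_sq_le_sq_sum_of_nonneg fun i _ => norm_nonneg _⟩

theorem exists_pos_sum_rpow_mul_le {α : ι → ℝ} (hα : ∀ i, 0 < α i) (L : ℝ) {ε : ℝ} (hε : 0 < ε) :
    ∃ l > 0, (∑ i, (1 / l) ^ α i) * L ≤ ε := by
  have hterm : ∀ i, Tendsto (fun l : ℝ => (1 / l) ^ α i) atTop (𝓝 0) := fun i => by
    simpa only [one_div, Real.zero_rpow (hα i).ne'] using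
      tendsto_inv_atTop_zero.rpow_const (.inr (hα i).le)
  have hsum : Tendsto (fun l : ℝ => (∑ i, (1 / l) ^ α i) * L) atTop (𝓝 0) := by
    simpa using (tendsto_finsetSum Finset.univ fun i _ => hterm i).mul_const L
  exact ((eventually_gt_atTop 0).and (hsum.eventually_le_const hε)).exists

/-- The right-hand side of the Volterra equation
`q_i(t) = (q_a)_i (t - a) ^ (α_i - 1) / Γ(α_i) + I^{α_i}_{a+}[F_i(q(·), ·)](t)`
equivalent to the Riemann–Liouville Cauchy problem. -/
noncomputable def volterraMap (a : ℝ) (α : ι → ℝ) (qa : EuclideanSpace ℝ ι)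
    (F : EuclideanSpace ℝ ι → ℝ → EuclideanSpace ℝ ι) (q : ℝ → EuclideanSpace ℝ ι) (t : ℝ) :
    EuclideanSpace ℝ ι :=
  WithLp.toLp 2 fun i => qa i * rlPower a (α i) t + rlInt a (α i) (fun τ => F (q τ) τ i) t

/-- `q` is an integrable solution of the Volterra equation on `[a, b]`. -/
structure IsVolterraSolution (a b : ℝ) (α : ι → ℝ) (qa : EuclideanSpace ℝ ι)
    (F : EuclideanSpace ℝ ι → ℝ → EuclideanSpace ℝ ι) (q : ℝ → EuclideanSpace ℝ ι) : Prop where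
  integrableOn : IntegrableOn q (Icc a b)
  ae_eq : volterraMap a α qa F q =ᵐ[volume.restrict (Icc a b)] q

variable {a b c l : ℝ} {α : ι → ℝ} {qa : EuclideanSpace ℝ ι} {L : ℝ≥0}
  {F : EuclideanSpace ℝ ι → ℝ → EuclideanSpace ℝ ι} {q u v : ℝ → EuclideanSpace ℝ ι}

theorem integrableOn_volterraMap (hα : ∀ i, 0 < α i)
    (hF : IsLipschitzCaratheodory (volume.restrict (Icc a b)) L F)
    (hu : IntegrableOn u (Icc a b)) : IntegrableOn (volterraMap a α qa F u) (Icc a b) :=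
  Integrable.of_eval_piLp fun i =>
    integrableOn_rlPower_add_rlInt (hα i) (qa i) ((hF.integrable_comp hu).eval_piLp i)

theorem volterraMap_sub_ae_eq (hα : ∀ i, 0 < α i)
    (hF : IsLipschitzCaratheodory (volume.restrict (Icc a b)) L F)
    (hu : IntegrableOn u (Icc a b)) (hv : IntegrableOn v (Icc a b)) :
    ∀ᵐ t ∂volume.restrict (Icc a b), ∀ i, (volterraMap a α qa F u t - volterraMap a α qa F v t) i =
      rlInt a (α i) (fun τ => (F (u τ) τ - F (v τ) τ) i) t := by
  refine ae_all_iff.2 fun i => ?_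
  filter_upwards [rlInt_sub (hα i).le ((hF.integrable_comp hu).eval_piLp i)
    ((hF.integrable_comp hv).eval_piLp i)] with t ht
  exact (add_sub_add_left_eq_sub _ _ _).trans ht.symm

theorem integral_norm_volterraMap_sub_le (hl : 0 < l) (hα : ∀ i, 0 < α i)
    (hF : IsLipschitzCaratheodory (volume.restrict (Icc a b)) L F)
    (hu : IntegrableOn u (Icc a b)) (hv : IntegrableOn v (Icc a b)) :
    ∫ t, ‖volterraMap a α qa F u t - volterraMap a α qa F v t‖ ∂expMeasure l a b ≤
      (∑ i, (1 / l) ^ α i) * L * ∫ t, ‖u t - v t‖ ∂expMeasure l a b := by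
  set w : ℝ → EuclideanSpace ℝ ι := fun τ => F (u τ) τ - F (v τ) τ
  have hw : IntegrableOn w (Icc a b) := (hF.integrable_comp hu).sub (hF.integrable_comp hv)
  have hw_le : ∫ t, ‖w t‖ ∂expMeasure l a b ≤ L * ∫ t, ‖u t - v t‖ ∂expMeasure l a b :=
    integral_norm_comp_sub_le (by simpa only [ae_expMeasure] using hF.ae_lipschitzWith)
      (integrable_expMeasure_iff.2 hu) (integrable_expMeasure_iff.2 hv)
  have hw_int : ∀ i, Integrable (fun t => rlInt a (α i) (fun τ => w τ i) t) (expMeasure l a b) :=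
    fun i => integrable_expMeasure_iff.2 (integrableOn_rlInt (hα i) (hw.eval_piLp i))
  have hw_component : ∀ i, ∫ t, ‖w t i‖ ∂expMeasure l a b ≤ ∫ t, ‖w t‖ ∂expMeasure l a b :=
    fun i => integral_mono_of_nonneg (.of_forall fun t => norm_nonneg _)
      (integrable_expMeasure_iff.2 hw).norm (.of_forall fun t => PiLp.norm_apply_le _ i)
  calc ∫ t, ‖volterraMap a α qa F u t - volterraMap a α qa F v t‖ ∂expMeasure l a b
      ≤ ∫ t, ∑ i, ‖rlInt a (α i) (fun τ => w τ i) t‖ ∂expMeasure l a b := by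
        refine integral_mono_of_nonneg (.of_forall fun t => norm_nonneg _)
          (integrable_finsetSum _ fun i _ => (hw_int i).norm) ?_
        rw [EventuallyLE, ae_expMeasure]
        filter_upwards [volterraMap_sub_ae_eq (qa := qa) hα hF hu hv] with t ht
        simpa only [ht] using norm_le_sum_norm_apply
          (volterraMap a α qa F u t - volterraMap a α qa F v t)
    _ = ∑ i, ∫ t, ‖rlInt a (α i) (fun τ => w τ i) t‖ ∂expMeasure l a b :=
        integral_finsetSum _ fun i _ => (hw_int i).norm
    _ ≤ ∑ i, (1 / l) ^ α i * (L * ∫ t, ‖u t - v t‖ ∂expMeasure l a b) := by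
        gcongr with i
        refine (integral_norm_rlInt_le hl (hα i) (hw.eval_piLp i)).trans ?_
        gcongr
        exact (hw_component i).trans hw_le
    _ = (∑ i, (1 / l) ^ α i) * L * ∫ t, ‖u t - v t‖ ∂expMeasure l a b := by
        rw [← Finset.sum_mul, mul_assoc]

theorem exists_expMeasure_volterraMap_contraction (hα : ∀ i, 0 < α i)
    (hF : IsLipschitzCaratheodory (volume.restrict (Icc a b)) L F) (qa : EuclideanSpace ℝ ι)
    {K : ℝ≥0} (hK : 0 < K) :
    ∃ l, ∀ u v, Integrable u (expMeasure l a b) → Integrable v (expMeasure l a b) →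
      ∫ t, ‖volterraMap a α qa F u t - volterraMap a α qa F v t‖ ∂expMeasure l a b ≤
        K * ∫ t, ‖u t - v t‖ ∂expMeasure l a b := by
  obtain ⟨l, hl, hlK⟩ := exists_pos_sum_rpow_mul_le hα L (NNReal.coe_pos.2 hK)
  refine ⟨l, fun u v hu hv => ?_⟩
  calc ∫ t, ‖volterraMap a α qa F u t - volterraMap a α qa F v t‖ ∂expMeasure l a b
      ≤ (∑ i, (1 / l) ^ α i) * L * ∫ t, ‖u t - v t‖ ∂expMeasure l a b :=
        integral_norm_volterraMap_sub_le hl hα hF (integrable_expMeasure_iff.1 hu)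
          (integrable_expMeasure_iff.1 hv)
    _ ≤ K * ∫ t, ‖u t - v t‖ ∂expMeasure l a b := by gcongr

theorem exists_isVolterraSolution (hα : ∀ i, 0 < α i)
    (hF : IsLipschitzCaratheodory (volume.restrict (Icc a b)) L F) (qa : EuclideanSpace ℝ ι) :
    ∃ q, IsVolterraSolution a b α qa F q := by
  obtain ⟨l, hl⟩ := exists_expMeasure_volterraMap_contraction hα hF qa one_half_pos
  obtain ⟨q, hq, hqV⟩ := exists_integrable_ae_fixedPoint one_half_lt_one
    (fun u hu => integrable_expMeasure_iff.2
      (integrableOn_volterraMap hα hF (integrable_expMeasure_iff.1 hu))) hl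
  rw [EventuallyEq, ae_expMeasure] at hqV
  exact ⟨q, integrable_expMeasure_iff.1 hq, hqV⟩

namespace IsVolterraSolution

theorem ae_eq_of_isVolterraSolution (hu : IsVolterraSolution a b α qa F u)
    (hv : IsVolterraSolution a b α qa F v) (hα : ∀ i, 0 < α i)
    (hF : IsLipschitzCaratheodory (volume.restrict (Icc a b)) L F) :
    u =ᵐ[volume.restrict (Icc a b)] v := by
  obtain ⟨l, hl⟩ := exists_expMeasure_volterraMap_contraction hα hF qa one_half_pos
  have h : u =ᵐ[expMeasure l a b] v := by
    refine ae_eq_of_ae_fixedPoints one_half_lt_one hl (integrable_expMeasure_iff.2 hu.integrableOn)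
      (integrable_expMeasure_iff.2 hv.integrableOn) ?_ ?_ <;> rw [EventuallyEq, ae_expMeasure]
    exacts [hu.ae_eq, hv.ae_eq]
  rwa [EventuallyEq, ae_expMeasure] at h

theorem mono (hq : IsVolterraSolution a c α qa F q) (hbc : b ≤ c) :
    IsVolterraSolution a b α qa F q :=
  ⟨hq.integrableOn.mono_set (Icc_subset_Icc_right hbc),
    ae_restrict_of_ae_restrict_of_subset (Icc_subset_Icc_right hbc) hq.ae_eq⟩

theorem congr_ae (hu : IsVolterraSolution a b α qa F u) (hα : ∀ i, 0 ≤ α i)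
    (huv : u =ᵐ[volume.restrict (Icc a b)] v) : IsVolterraSolution a b α qa F v := by
  refine ⟨hu.integrableOn.congr_fun_ae huv, ?_⟩
  have hF : ∀ i, (fun τ => F (v τ) τ i) =ᵐ[volume.restrict (Icc a b)] fun τ => F (u τ) τ i :=
    fun i => huv.mono fun τ hτ => by simp only [hτ]
  filter_upwards [huv, hu.ae_eq, ae_all_iff.2 fun i => rlInt_congr_ae (hα i) (hF i)]
    with t ht htu htF
  rw [← ht, ← htu]
  simp only [volterraMap, htF]

end IsVolterraSolution

theorem exists_forall_isVolterraSolution {I : Set ℝ} (hI : I.OrdConnected) (hne : I.Nonempty)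
    (hα : ∀ i, 0 < α i)
    (hF : ∀ b ∈ I, ∃ L, IsLipschitzCaratheodory (volume.restrict (Icc a b)) L F)
    (qa : EuclideanSpace ℝ ι) : ∃ q, ∀ b ∈ I, IsVolterraSolution a b α qa F q := by
  have hlocal : ∀ b, ∃ q, b ∈ I → IsVolterraSolution a b α qa F q := fun b => by
    by_cases hb : b ∈ I
    · obtain ⟨L, hL⟩ := hF b hb
      exact (exists_isVolterraSolution hα hL qa).imp fun q hq _ => hq
    · exact ⟨0, fun h => absurd h hb⟩
  choose p hp using hlocal
  obtain ⟨q, hq⟩ := exists_forall_ae_eq_Icc hI hne fun b hb c hc hbc => by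
    obtain ⟨L, hL⟩ := hF b hb
    exact (hp b hb).ae_eq_of_isVolterraSolution ((hp c hc).mono hbc) hα hL
  exact ⟨q, fun b hb => (hp b hb).congr_ae (fun i => (hα i).le) (hq b hb).symm⟩

end Volterra

section CauchyProblem

variable {m : ℕ} {a : ℝ} {I : Set ℝ} {α : Fin m → ℝ} {qa : EuclideanSpace ℝ (Fin m)}
  {F : EuclideanSpace ℝ (Fin m) → ℝ → EuclideanSpace ℝ (Fin m)}
  {q : ℝ → EuclideanSpace ℝ (Fin m)}

theorem IsRLSolution.isVolterraSolution (hq : IsRLSolution a I α qa F q) (hI : I.OrdConnected)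
    (haI : a ∈ I) (hα : ∀ i, 0 < α i ∧ α i ≤ 1) {b : ℝ} (hb : b ∈ I) :
    IsVolterraSolution a b α qa F q := by
  refine ⟨Integrable.of_eval_piLp fun i => hq.1 i b hb, ?_⟩
  suffices h : ∀ i, (fun t => q t i) =ᵐ[volume.restrict (Icc a b)] fun t =>
      qa i * rlPower a (α i) t + rlInt a (α i) (fun τ => F (q τ) τ i) t by
    filter_upwards [ae_all_iff.2 h] with t ht
    exact PiLp.ext fun i => (ht i).symm
  intro i
  obtain ⟨k, hk, hqk, hkF⟩ := hq.2 i
  have hsub : Icc a b ⊆ I := hI.out haI hb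
  have hvolterra := (rlInt_ae_eq_add_integral_iff (hα i).1 (hα i).2 (hq.1 i b hb) (hk b hb)).1
    (ae_restrict_of_ae_restrict_of_subset hsub hqk)
  filter_upwards [hvolterra, rlInt_congr_ae (hα i).1.le
    (ae_restrict_of_ae_restrict_of_subset hsub hkF)] with t ht htF
  rw [ht, htF]

theorem isRLSolution_iff_forall_isVolterraSolution (hI : I.OrdConnected) (haI : a ∈ I)
    (hIa : I ⊆ Ici a) (hα : ∀ i, 0 < α i ∧ α i ≤ 1)
    (hF : ∀ b ∈ I, ∃ L, IsLipschitzCaratheodory (volume.restrict (Icc a b)) L F) :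
    IsRLSolution a I α qa F q ↔ ∀ b ∈ I, IsVolterraSolution a b α qa F q := by
  refine ⟨fun hq b hb => hq.isVolterraSolution hI haI hα hb, fun hq => ?_⟩
  have hq_int : ∀ i, LocIntegrableOn a I fun t => q t i :=
    fun i b hb => (hq b hb).integrableOn.eval_piLp i
  have hFq_int : ∀ i, LocIntegrableOn a I fun t => F (q t) t i := fun i b hb => by
    obtain ⟨L, hL⟩ := hF b hb
    exact (hL.integrable_comp (hq b hb).integrableOn).eval_piLp i
  refine ⟨hq_int, fun i => ⟨_, hFq_int i, ?_, .of_forall fun t => rfl⟩⟩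
  refine ae_restrict_of_forall_ae_restrict_Icc hI haI hIa fun b hb => ?_
  refine (rlInt_ae_eq_add_integral_iff (hα i).1 (hα i).2 (hq_int i b hb) (hFq_int i b hb)).2 ?_
  filter_upwards [(hq b hb).ae_eq] with t ht
  exact (congrArg (· i) ht).symm

end CauchyProblem

theorem statement5 (a : ℝ) (If : Set ℝ)
    (haI : a ∈ If) (hIsub : If ⊆ Set.Ici a) (hIint : (interior If).Nonempty)
    (hIord : If.OrdConnected)
    (m : ℕ) (hm : 0 < m) (α : Fin m → ℝ) (hα : ∀ i, 0 < α i ∧ α i ≤ 1)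
    (qa : EuclideanSpace ℝ (Fin m))
    (F : EuclideanSpace ℝ (Fin m) → ℝ → EuclideanSpace ℝ (Fin m))
    -- Carathéodory assumptions
    (hFmeas : ∀ x, MeasureTheory.AEStronglyMeasurable (fun t => F x t)
      (MeasureTheory.volume.restrict If))
    (hFcont : ∀ᵐ t ∂(MeasureTheory.volume.restrict If), Continuous fun x => F x t)
    -- `F(0,·)` is locally integrable on `If`
    (hzero : ∀ b ∈ If, MeasureTheory.IntegrableOn (fun t => F 0 t) (Set.Icc a b))
    -- `F` is globally Lipschitz continuous in its first variable
    (hlip : ∀ c ∈ If, ∀ d ∈ If, c ≤ d → ∃ L : ℝ, 0 ≤ L ∧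
      ∀ x₁ x₂ : EuclideanSpace ℝ (Fin m),
        ∀ᵐ t ∂(MeasureTheory.volume.restrict (Set.Icc c d)),
          ‖F x₂ t - F x₁ t‖ ≤ L * ‖x₂ - x₁‖) :
    (∃ q : ℝ → EuclideanSpace ℝ (Fin m), IsRLSolution a If α qa F q) ∧
    ∀ q q' : ℝ → EuclideanSpace ℝ (Fin m),
      IsRLSolution a If α qa F q → IsRLSolution a If α qa F q' →
      ∀ᵐ t ∂(MeasureTheory.volume.restrict If), q t = q' t := by
  have hF : ∀ b ∈ If, ∃ L, IsLipschitzCaratheodory (volume.restrict (Icc a b)) L F := by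
    intro b hb
    have hsub : Icc a b ⊆ If := hIord.out haI hb
    obtain ⟨L, hL, hFL⟩ := hlip a haI b hb (hIsub hb)
    lift L to ℝ≥0 using hL
    refine ⟨L, ae_lipschitzWith_of_forall_ae
      (ae_restrict_of_ae_restrict_of_subset hsub hFcont) fun x y => ?_,
      fun x => (hFmeas x).mono_set hsub, hzero b hb⟩
    simpa only [dist_eq_norm] using hFL y x
  have hiff := fun q => isRLSolution_iff_forall_isVolterraSolution (qa := qa) (q := q)
    hIord haI hIsub hα hF
  constructor
  · obtain ⟨q, hq⟩ := exists_forall_isVolterraSolution hIord ⟨a, haI⟩ (fun i => (hα i).1) hF qa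
    exact ⟨q, (hiff q).2 hq⟩
  · intro q q' hq hq'
    refine ae_restrict_of_forall_ae_restrict_Icc hIord haI hIsub fun b hb => ?_
    obtain ⟨L, hL⟩ := hF b hb
    exact ((hiff q).1 hq b hb).ae_eq_of_isVolterraSolution ((hiff q').1 hq' b hb)
      (fun i => (hα i).1) hL
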